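/- Suppose Ω = U_Ω Σ_Ω V_Ωᵀ with U_Ω ∈ ℝ^{(d_x+d_u) × (d_x+d_u)} and V_Ω ∈ ℝ^{n × n} orthogonal and Σ_Ω ∈ ℝ^{(d_x+d_u) × n}, suppose Ω Ωᵀ is invertible, let Û_Y ∈ ℝ^{d_x × r_x} have orthonormal columns, and set E_x = Û_Yᵀ. Write U_Ωᵀ = [U_{Ω,1}ᵀ U_{Ω,2}ᵀ] where U_{Ω,1} consists of the first d_x rows and U_{Ω,2} of the last d_u rows of U_Ω. Let G = [A_R B_R] (with A_R ∈ ℝ^{r_x × r_x} the first r_x columns and B_R ∈ ℝ^{r_x × d_u} the last d_u columns) be the unique minimizer of L_pred(E_x, ·). Then, with limits taken as ε → 0 along nonzero real ε, A_R = lim_{ε → 0} Û_Yᵀ Y V_Ω (Σ_Ωᵀ U_{Ω,1}ᵀ Û_Y Û_Yᵀ U_{Ω,1} Σ_Ω + Σ_Ωᵀ U_{Ω,2}ᵀ U_{Ω,2} Σ_Ω + ε² I_n)⁻¹ Σ_Ωᵀ U_{Ω,1}ᵀ Û_Y and B_R = lim_{ε → 0} Û_Yᵀ Y V_Ω (Σ_Ωᵀ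 U_{Ω,1}ᵀ Û_Y Û_Yᵀ U_{Ω,1} Σ_Ω + Σ_Ωᵀ U_{Ω,2}ᵀ U_{Ω,2} Σ_Ω + ε² I_n)⁻¹ Σ_Ωᵀ U_{Ω,2}ᵀ. -/

import Mathlib

open Matrix

/-- Squared Frobenius norm of a real matrix. -/
noncomputable def frobSq {m n : Type*} [Fintype m] [Fintype n] (M : Matrix m n ℝ) : ℝ :=
  ∑ i, ∑ j, (M i j) ^ 2

/-- The augmented block-diagonal matrix `E_{xu}` with blocks `E_x` and `I_{d_u}`. -/
def Exu {d_x d_u r_x : ℕ} (Ex : Matrix (Fin r_x) (Fin d_x) ℝ) :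
    Matrix (Fin r_x ⊕ Fin d_u) (Fin d_x ⊕ Fin d_u) ℝ :=
  Matrix.fromBlocks Ex 0 0 1

/-- The prediction loss `L_pred(E_x, G) = (1/n) ‖E_x Y − G E_{xu} Ω‖_F²`. -/
noncomputable def Lpred {d_x d_u r_x n : ℕ}
    (Y : Matrix (Fin d_x) (Fin n) ℝ) (Ω : Matrix (Fin d_x ⊕ Fin d_u) (Fin n) ℝ)
    (Ex : Matrix (Fin r_x) (Fin d_x) ℝ)
    (G : Matrix (Fin r_x) (Fin r_x ⊕ Fin d_u) ℝ) : ℝ :=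
  (1 / (n : ℝ)) * frobSq (Ex * Y - G * Exu (d_u := d_u) Ex * Ω)

open Filter

/-!
When `E_{xu} Ω` has full row rank, Pythagoras identifies the minimizer of the loss as
`E_x Y (E_{xu} Ω)ᵀ (E_{xu} Ω (E_{xu} Ω)ᵀ)⁻¹`. Since `Vᵀ V = 1`, this formula is unchanged when
`Y` and `Ω` are replaced by `Y V` and `Ω V = U S`, and it becomes `E_x Y V Wᵀ (W Wᵀ)⁻¹` with
`W = E_{xu} U S`. Finally `Wᵀ (W Wᵀ)⁻¹` is a limit of regularized inverses, by the push-through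
identity `(Wᵀ W + c)⁻¹ Wᵀ = Wᵀ (W Wᵀ + c)⁻¹`, whose right-hand side is continuous at `c = 0`.
-/

open Topology

section PushThrough

variable {m n R : Type*} [Fintype m] [Fintype n] [DecidableEq m] [DecidableEq n]

theorem isUnit_mul_add_smul_one_comm [CommRing R] (A : Matrix m n R) (B : Matrix n m R) {c : R}
    (hc : IsUnit c) :
    IsUnit (A * B + c • (1 : Matrix m m R)) ↔ IsUnit (B * A + c • (1 : Matrix n n R)) := by
  lift c to Rˣ using hc
  have hAB : A * B + (c : R) • (1 : Matrix m m R) = c • ((c⁻¹ • A) * B + 1) := by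
    rw [Matrix.smul_mul, smul_add, smul_inv_smul, Units.smul_def]
  have hBA : B * A + (c : R) • (1 : Matrix n n R) = c • (B * (c⁻¹ • A) + 1) := by
    rw [Matrix.mul_smul, smul_add, smul_inv_smul, Units.smul_def]
  rw [hAB, hBA, isUnit_smul_iff, isUnit_smul_iff, isUnit_iff_isUnit_det, isUnit_iff_isUnit_det,
    det_mul_add_one_comm]

theorem inv_mul_add_smul_one_mul [CommRing R] (A : Matrix m n R) (B : Matrix n m R) {c : R}
    (hc : IsUnit c) (hAB : IsUnit (A * B + c • (1 : Matrix m m R))) :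
    (B * A + c • (1 : Matrix n n R))⁻¹ * B = B * (A * B + c • (1 : Matrix m m R))⁻¹ := by
  have hBA := (isUnit_mul_add_smul_one_comm A B hc).mp hAB
  rw [isUnit_iff_isUnit_det] at hAB hBA
  set P := B * A + c • (1 : Matrix n n R) with hP
  set Q := A * B + c • (1 : Matrix m m R) with hQ
  have hPQ : P * B = B * Q := by
    simp only [hP, hQ, Matrix.add_mul, Matrix.mul_add, Matrix.mul_assoc, Matrix.smul_mul,
      Matrix.mul_smul, Matrix.one_mul, Matrix.mul_one]
  calc P⁻¹ * B = P⁻¹ * (B * Q) * Q⁻¹ := by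
        rw [← Matrix.mul_assoc, mul_nonsing_inv_cancel_right _ _ hAB]
    _ = B * Q⁻¹ := by rw [← hPQ, nonsing_inv_mul_cancel_left _ _ hBA]

theorem tendsto_inv_mul_add_smul_one_mul [Field R] [TopologicalSpace R]
    [IsTopologicalDivisionRing R] [T1Space R] {A : Matrix m n R} {B : Matrix n m R}
    (hAB : IsUnit (A * B)) :
    Tendsto (fun c : R => (B * A + c • (1 : Matrix n n R))⁻¹ * B) (𝓝[≠] 0)
      (𝓝 (B * (A * B)⁻¹)) := by
  set Q : R → Matrix m m R := fun c => A * B + c • 1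
  have hQ : Continuous Q := by fun_prop
  have hQ₀ : Q 0 = A * B := by simp only [Q, zero_smul, add_zero]
  have hdet : (Q 0).det ≠ 0 := by
    rw [hQ₀]
    exact ((isUnit_iff_isUnit_det _).mp hAB).ne_zero
  have hinv : ContinuousAt (fun c => B * (Q c)⁻¹) 0 := by
    have hmul : Continuous fun X : Matrix m m R => B * X := by fun_prop
    refine hmul.continuousAt.comp (ContinuousAt.comp (continuousAt_matrix_inv _ ?_) hQ.continuousAt)
    rw [Ring.inverse_eq_inv']
    exact continuousAt_inv₀ hdet
  have hunit : ∀ᶠ c in 𝓝[≠] 0, IsUnit (Q c) := by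
    filter_upwards [nhdsWithin_le_nhds (hQ.matrix_det.continuousAt.eventually_ne hdet)] with c hc
    exact (isUnit_iff_isUnit_det _).mpr hc.isUnit
  rw [← hQ₀]
  refine (hinv.tendsto.mono_left nhdsWithin_le_nhds).congr' ?_
  filter_upwards [hunit, self_mem_nhdsWithin] with c hQc hc
  exact (inv_mul_add_smul_one_mul A B (Ne.isUnit hc) hQc).symm

end PushThrough

section FullRowRank

theorem vecMul_injective_of_mul_eq_one {m n R : Type*} [Fintype m] [Fintype n] [DecidableEq m]
    [Semiring R] {A : Matrix m n R} {B : Matrix n m R} (h : A * B = 1) :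
    Function.Injective A.vecMul :=
  Function.LeftInverse.injective (g := B.vecMul) fun v => by
    simp only [vecMul_vecMul, h, vecMul_one]

variable {l m n K : Type*} [Fintype l] [Fintype m] [Fintype n] [DecidableEq l] [DecidableEq m]
  [Field K] [PartialOrder K] [StarRing K] [StarOrderedRing K]

theorem isUnit_self_mul_conjTranspose_iff {A : Matrix m n K} :
    IsUnit (A * Aᴴ) ↔ Function.Injective A.vecMul := by
  rw [← vecMul_injective_iff_isUnit, ← coe_vecMulLinear, ← coe_vecMulLinear,
    injective_iff_map_eq_zero, injective_iff_map_eq_zero]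
  simp only [vecMulLinear_apply, vecMul_self_mul_conjTranspose_eq_zero]

theorem isUnit_mul_conjTranspose_mul {E : Matrix l m K} {A : Matrix m n K}
    (hE : Function.Injective E.vecMul) (hA : IsUnit (A * Aᴴ)) :
    IsUnit (E * A * (E * A)ᴴ) := by
  rw [isUnit_self_mul_conjTranspose_iff] at hA ⊢
  simpa only [Function.comp_def, vecMul_vecMul] using hA.comp hE

end FullRowRank

section LeastSquares

variable {k m n : Type*} [Fintype k] [Fintype m] [Fintype n]

theorem frobSq_nonneg (M : Matrix m n ℝ) : 0 ≤ frobSq M := by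
  unfold frobSq
  positivity

theorem frobSq_eq_trace (M : Matrix m n ℝ) : frobSq M = (M * Mᵀ).trace := by
  simp only [frobSq, trace, diag_apply, mul_apply, transpose_apply, sq]

theorem frobSq_eq_zero_iff {M : Matrix m n ℝ} : frobSq M = 0 ↔ M = 0 := by
  rw [frobSq_eq_trace, ← conjTranspose_eq_transpose_of_trivial,
    trace_mul_conjTranspose_self_eq_zero_iff]

theorem frobSq_add_of_mul_transpose_eq_zero {M N : Matrix m n ℝ} (h : M * Nᵀ = 0) :
    frobSq (M + N) = frobSq M + frobSq N := by
  have h' : N * Mᵀ = 0 := by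
    rw [← transpose_eq_zero, transpose_mul, transpose_transpose, h]
  simp only [frobSq_eq_trace, transpose_add, Matrix.add_mul, Matrix.mul_add, h, h', trace_add,
    add_zero, zero_add]

theorem frobSq_sub_mul_of_normal_eq {A : Matrix k n ℝ} {B : Matrix m n ℝ} {G₀ : Matrix m k ℝ}
    (hG₀ : G₀ * (A * Aᵀ) = B * Aᵀ) (G : Matrix m k ℝ) :
    frobSq (B - G * A) = frobSq (B - G₀ * A) + frobSq ((G₀ - G) * A) := by
  have horth : (B - G₀ * A) * ((G₀ - G) * A)ᵀ = 0 := by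
    rw [transpose_mul, ← Matrix.mul_assoc, Matrix.sub_mul, Matrix.mul_assoc G₀, hG₀, sub_self,
      Matrix.zero_mul]
  rw [← frobSq_add_of_mul_transpose_eq_zero horth, Matrix.sub_mul, sub_add_sub_cancel]

theorem eq_mul_inv_of_forall_frobSq_le [DecidableEq k] {A : Matrix k n ℝ} {B : Matrix m n ℝ}
    {G : Matrix m k ℝ} (hA : IsUnit (A * Aᵀ))
    (hG : ∀ G' : Matrix m k ℝ, frobSq (B - G * A) ≤ frobSq (B - G' * A)) :
    G = B * Aᵀ * (A * Aᵀ)⁻¹ := by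
  rw [isUnit_iff_isUnit_det] at hA
  set G₀ := B * Aᵀ * (A * Aᵀ)⁻¹
  have hG₀ : G₀ * (A * Aᵀ) = B * Aᵀ := nonsing_inv_mul_cancel_right _ _ hA
  have hzero : (G₀ - G) * A = 0 := frobSq_eq_zero_iff.mp <| le_antisymm
    (by linarith only [hG G₀, frobSq_sub_mul_of_normal_eq hG₀ G]) (frobSq_nonneg _)
  have hG₀A : G₀ * A = G * A := by rwa [Matrix.sub_mul, sub_eq_zero] at hzero
  calc G = G * (A * Aᵀ) * (A * Aᵀ)⁻¹ := (mul_nonsing_inv_cancel_right _ _ hA).symm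
    _ = G₀ * (A * Aᵀ) * (A * Aᵀ)⁻¹ := by
      rw [← Matrix.mul_assoc, ← Matrix.mul_assoc, hG₀A]
    _ = G₀ := mul_nonsing_inv_cancel_right _ _ hA

theorem tendsto_of_forall_frobSq_le [DecidableEq k] {q : Type*} [Fintype q] [DecidableEq q]
    {A : Matrix k n ℝ} {B : Matrix m n ℝ} {W : Matrix k q ℝ} {V : Matrix n q ℝ} {G : Matrix m k ℝ}
    (hV : Vᵀ * V = 1) (hAWV : A = W * Vᵀ) (hA : IsUnit (A * Aᵀ))
    (hG : ∀ G' : Matrix m k ℝ, frobSq (B - G * A) ≤ frobSq (B - G' * A)) :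
    Tendsto (fun ε : ℝ => B * V * ((Wᵀ * W + ε ^ 2 • (1 : Matrix q q ℝ))⁻¹ * Wᵀ)) (𝓝[≠] 0)
      (𝓝 G) := by
  have hgram : A * Aᵀ = W * Wᵀ := by
    rw [hAWV, transpose_mul, transpose_transpose, Matrix.mul_assoc, ← Matrix.mul_assoc Vᵀ, hV,
      Matrix.one_mul]
  have hlim : G = B * V * (Wᵀ * (W * Wᵀ)⁻¹) := by
    rw [eq_mul_inv_of_forall_frobSq_le hA hG, hgram, hAWV, transpose_mul, transpose_transpose]
    simp only [Matrix.mul_assoc]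
  have hsq : Tendsto (fun ε : ℝ => ε ^ 2) (𝓝[≠] 0) (𝓝[≠] 0) :=
    tendsto_nhdsWithin_iff.mpr
      ⟨((continuous_pow 2).tendsto' 0 0 (zero_pow two_ne_zero)).mono_left nhdsWithin_le_nhds,
        eventually_mem_nhdsWithin.mono fun _ => pow_ne_zero 2⟩
  have hmul : Continuous fun X : Matrix q k ℝ => B * V * X := by fun_prop
  rw [hlim]
  exact (hmul.tendsto _).comp ((tendsto_inv_mul_add_smul_one_mul (hgram ▸ hA)).comp hsq)

end LeastSquares

theorem tendsto_fromCols_iff {α m n₁ n₂ R : Type*} [TopologicalSpace R] {l : Filter α}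
    {A : α → Matrix m n₁ R} {B : α → Matrix m n₂ R} {G : Matrix m (n₁ ⊕ n₂) R} :
    Tendsto (fun x => fromCols (A x) (B x)) l (𝓝 G) ↔
      Tendsto A l (𝓝 (G.submatrix id Sum.inl)) ∧ Tendsto B l (𝓝 (G.submatrix id Sum.inr)) := by
  refine ⟨fun h => ⟨((continuous_id.matrix_submatrix id Sum.inl).tendsto G).comp h,
    ((continuous_id.matrix_submatrix id Sum.inr).tendsto G).comp h⟩, fun ⟨hA, hB⟩ => ?_⟩
  refine tendsto_pi_nhds.mpr fun i => tendsto_pi_nhds.mpr ?_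
  rintro (j | j)
  · exact tendsto_pi_nhds.mp (tendsto_pi_nhds.mp hA i) j
  · exact tendsto_pi_nhds.mp (tendsto_pi_nhds.mp hB i) j

section PredictionLoss

variable {d_x d_u r_x n : ℕ}

theorem Exu_mul {q : Type*} (Ex : Matrix (Fin r_x) (Fin d_x) ℝ)
    (M : Matrix (Fin d_x ⊕ Fin d_u) q ℝ) :
    Exu (d_u := d_u) Ex * M = fromRows (Ex * M.submatrix Sum.inl id) (M.submatrix Sum.inr id) := by
  conv_lhs => rw [← fromRows_toRows M, Exu, fromBlocks_mul_fromRows]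
  simp only [Matrix.zero_mul, add_zero, zero_add, Matrix.one_mul]
  rfl

theorem Exu_mul_transpose_self {Ex : Matrix (Fin r_x) (Fin d_x) ℝ} (hEx : Ex * Exᵀ = 1) :
    Exu (d_u := d_u) Ex * (Exu (d_u := d_u) Ex)ᵀ = 1 := by
  simp only [Exu, fromBlocks_transpose, fromBlocks_multiply, hEx, transpose_zero, transpose_one,
    Matrix.mul_zero, Matrix.zero_mul, Matrix.mul_one, add_zero, zero_add, fromBlocks_one]

theorem Lpred_le_Lpred_iff (hn : 0 < n) {Y : Matrix (Fin d_x) (Fin n) ℝ}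
    {Ω : Matrix (Fin d_x ⊕ Fin d_u) (Fin n) ℝ} {Ex : Matrix (Fin r_x) (Fin d_x) ℝ}
    {G G' : Matrix (Fin r_x) (Fin r_x ⊕ Fin d_u) ℝ} :
    Lpred Y Ω Ex G ≤ Lpred Y Ω Ex G' ↔
      frobSq (Ex * Y - G * (Exu (d_u := d_u) Ex * Ω)) ≤
        frobSq (Ex * Y - G' * (Exu (d_u := d_u) Ex * Ω)) := by
  have hn' : (0 : ℝ) < 1 / n := by positivity
  simp only [Lpred, mul_le_mul_iff_right₀ hn', Matrix.mul_assoc]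

theorem blocks_as_limits_general {p q : Type*} [Fintype p] [Fintype q] [DecidableEq q]
    (hn : 0 < n) {Y : Matrix (Fin d_x) (Fin n) ℝ} {Ω : Matrix (Fin d_x ⊕ Fin d_u) (Fin n) ℝ}
    {U : Matrix (Fin d_x ⊕ Fin d_u) p ℝ} {S : Matrix p q ℝ} {V : Matrix (Fin n) q ℝ}
    (hV : Vᵀ * V = 1) (hUSV : Ω = U * S * Vᵀ) {Uy : Matrix (Fin d_x) (Fin r_x) ℝ}
    (hgram : IsUnit (Exu (d_u := d_u) Uyᵀ * Ω * (Exu (d_u := d_u) Uyᵀ * Ω)ᵀ))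
    {G : Matrix (Fin r_x) (Fin r_x ⊕ Fin d_u) ℝ}
    (hG : ∀ G' : Matrix (Fin r_x) (Fin r_x ⊕ Fin d_u) ℝ, Lpred Y Ω Uyᵀ G ≤ Lpred Y Ω Uyᵀ G') :
    Tendsto
      (fun ε : ℝ =>
        Uyᵀ * Y * V *
          (Sᵀ * (U.submatrix Sum.inl id)ᵀ * Uy * Uyᵀ * U.submatrix Sum.inl id * S +
            Sᵀ * (U.submatrix Sum.inr id)ᵀ * U.submatrix Sum.inr id * S +
            ε ^ 2 • (1 : Matrix q q ℝ))⁻¹ *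
          Sᵀ * (U.submatrix Sum.inl id)ᵀ * Uy)
      (𝓝[≠] 0) (𝓝 (G.submatrix id Sum.inl)) ∧
    Tendsto
      (fun ε : ℝ =>
        Uyᵀ * Y * V *
          (Sᵀ * (U.submatrix Sum.inl id)ᵀ * Uy * Uyᵀ * U.submatrix Sum.inl id * S +
            Sᵀ * (U.submatrix Sum.inr id)ᵀ * U.submatrix Sum.inr id * S +
            ε ^ 2 • (1 : Matrix q q ℝ))⁻¹ *
          Sᵀ * (U.submatrix Sum.inr id)ᵀ)
      (𝓝[≠] 0) (𝓝 (G.submatrix id Sum.inr)) := by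
  set U₁ := U.submatrix Sum.inl id
  set U₂ := U.submatrix Sum.inr id
  have hEΩ : Exu (d_u := d_u) Uyᵀ * Ω = fromRows (Uyᵀ * U₁ * S) (U₂ * S) * Vᵀ := by
    rw [hUSV, ← Matrix.mul_assoc, ← Matrix.mul_assoc, Exu_mul, fromRows_mul]
  have hlim := tendsto_of_forall_frobSq_le hV hEΩ hgram fun G' => (Lpred_le_Lpred_iff hn).mp (hG G')
  simp only [transpose_fromRows, transpose_mul, transpose_transpose, fromCols_mul_fromRows,
    mul_fromCols, tendsto_fromCols_iff] at hlim
  simpa only [Matrix.mul_assoc] using hlim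

end PredictionLoss

/-- Corollary (DMDc link): with a full SVD `Ω = U_Ω Σ_Ω V_Ωᵀ`, `Ω Ωᵀ` invertible,
`E_x = Û_Yᵀ` where `Û_Y` has orthonormal columns, and `G = [A_R  B_R]` the unique
minimizer of `L_pred(E_x, ·)` (here `A_R` consists of the first `r_x` columns of `G`
and `B_R` of the last `d_u` columns), the blocks `A_R` and `B_R` are obtained as the
stated limits as `ε → 0` along nonzero `ε`. `U_{Ω,1}` denotes the first `d_x` rows
of `U_Ω` and `U_{Ω,2}` its last `d_u` rows. -/
theorem blocks_as_limits (d_x d_u r_x n : ℕ)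
    (hdx : 0 < d_x) (hdu : 0 < d_u) (hrx : 0 < r_x) (hn : 0 < n) (hrd : r_x ≤ d_x)
    (Y : Matrix (Fin d_x) (Fin n) ℝ) (Ω : Matrix (Fin d_x ⊕ Fin d_u) (Fin n) ℝ)
    (U : Matrix (Fin d_x ⊕ Fin d_u) (Fin d_x ⊕ Fin d_u) ℝ)
    (S : Matrix (Fin d_x ⊕ Fin d_u) (Fin n) ℝ)
    (V : Matrix (Fin n) (Fin n) ℝ)
    (hU : Uᵀ * U = 1) (hV : Vᵀ * V = 1) (hSVD : Ω = U * S * Vᵀ)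
    (hΩ : IsUnit (Ω * Ωᵀ))
    (Uy : Matrix (Fin d_x) (Fin r_x) ℝ) (hUy : Uyᵀ * Uy = 1)
    (G : Matrix (Fin r_x) (Fin r_x ⊕ Fin d_u) ℝ)
    (hG : ∀ G' : Matrix (Fin r_x) (Fin r_x ⊕ Fin d_u) ℝ, Lpred Y Ω Uyᵀ G ≤ Lpred Y Ω Uyᵀ G') :
    Tendsto
      (fun ε : ℝ =>
        Uyᵀ * Y * V *
          (Sᵀ * (U.submatrix Sum.inl id)ᵀ * Uy * Uyᵀ * U.submatrix Sum.inl id * S +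
            Sᵀ * (U.submatrix Sum.inr id)ᵀ * U.submatrix Sum.inr id * S +
            ε ^ 2 • (1 : Matrix (Fin n) (Fin n) ℝ))⁻¹ *
          Sᵀ * (U.submatrix Sum.inl id)ᵀ * Uy)
      (nhdsWithin 0 {(0 : ℝ)}ᶜ)
      (nhds (G.submatrix id Sum.inl)) ∧
    Tendsto
      (fun ε : ℝ =>
        Uyᵀ * Y * V *
          (Sᵀ * (U.submatrix Sum.inl id)ᵀ * Uy * Uyᵀ * U.submatrix Sum.inl id * S +
            Sᵀ * (U.submatrix Sum.inr id)ᵀ * U.submatrix Sum.inr id * S +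
            ε ^ 2 • (1 : Matrix (Fin n) (Fin n) ℝ))⁻¹ *
          Sᵀ * (U.submatrix Sum.inr id)ᵀ)
      (nhdsWithin 0 {(0 : ℝ)}ᶜ)
      (nhds (G.submatrix id Sum.inr)) := by
  exact blocks_as_limits_general hn hV hSVD
    (isUnit_mul_conjTranspose_mul (vecMul_injective_of_mul_eq_one (Exu_mul_transpose_self hUy)) hΩ)
    hG
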